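/- arXiv:1206.7001 — 4 statements merged into one kernel-verified Lean document; each statement's English description precedes it below -/
import Mathlib

section
/- Let g ≥ 3 and n ≥ 1 be integers. Suppose given rational numbers c_1,…,c_n, and a rational number e(h,P) for every pair (h,P) with 0 ≤ h ≤ g and P ⊆ {1,…,n} such that |P| ≥ 2 if h = 0 and |P^c| ≥ 2 if h = g, satisfying the symmetry e(h,P) = e(g−h,P^c). Assume that: (i) for every i ∈ {1,…,n}: (2g−2)·c_i + Σ_{j≠i} e(0,{i,j}) = 0; (ii) for every P ⊆ {1,…,n} with |P| ≥ 2: (2g−2)·Σ_{i∈P} c_i + (2 − 2g − (n−|P|))·e(0,P) + Σ_{j∉P} e(0,P∪{j}) = 0; (iii) for every pair (h,P) with 1 ≤ h ≤ g−1, P ⊆ {1,…,n}, and (h,P) ≠ (g−1,{1,…,n}): Σ_{i∉P} c_i + (2 − 2(g−h) − (n−|P|))·e(h,P) + Σ_{j∉P} e(h,P∪{j}) = 0. Then c_i = 0 for all i and e(h,P) = 0 for all (h,P). -/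
open Finset

/-- A divisor class `Σ cᵢ Kᵢ + Σ e(h,P) δ_h^P` (with zero `λ₁` and `δ_irr` coefficients)
pairing to zero with all test curves `Zᵢ` and `Z_h^P` is zero. -/
theorem stmt_7 (g n : ℕ) (hg : 3 ≤ g) (hn : 1 ≤ n)
    (c : Fin n → ℚ) (e : ℕ → Finset (Fin n) → ℚ)
    (hsym : ∀ h ≤ g, ∀ P : Finset (Fin n), e h P = e (g - h) Pᶜ)
    (h1 : ∀ i : Fin n,
      (2*(g:ℚ) - 2) * c i + ∑ j ∈ univ \ {i}, e 0 {i, j} = 0)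
    (h2 : ∀ P : Finset (Fin n), 2 ≤ P.card →
      (2*(g:ℚ) - 2) * ∑ i ∈ P, c i
        + (2 - 2*(g:ℚ) - ((n:ℚ) - (P.card : ℚ))) * e 0 P
        + ∑ j ∈ Pᶜ, e 0 (insert j P) = 0)
    (h3 : ∀ (h : ℕ) (P : Finset (Fin n)), 1 ≤ h → h ≤ g - 1 →
      ¬(h = g - 1 ∧ P = univ) →
      ∑ i ∈ Pᶜ, c i
        + (2 - 2*((g:ℚ) - (h:ℚ)) - ((n:ℚ) - (P.card : ℚ))) * e h P
        + ∑ j ∈ Pᶜ, e h (insert j P) = 0) :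
    (∀ i, c i = 0) ∧
    ∀ (h : ℕ) (P : Finset (Fin n)), h ≤ g → (h = 0 → 2 ≤ P.card) →
      (h = g → 2 ≤ Pᶜ.card) → e h P = 0 := by
  have hgQ : (3:ℚ) ≤ g := by exact_mod_cast hg
  have hcard : ∀ P : Finset (Fin n), (n:ℚ) - (P.card:ℚ) = (Pᶜ.card : ℚ) := by
    intro P
    have := Finset.card_add_card_compl P
    rw [Fintype.card_fin] at this
    have h' : (P.card:ℚ) + (Pᶜ.card:ℚ) = n := by exact_mod_cast this
    linarith
  have hins : ∀ (P : Finset (Fin n)), ∀ j ∈ Pᶜ, (insert j P)ᶜ = Pᶜ.erase j := by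
    intro P j _
    ext x
    simp [not_or]
  -- the solution for 1 ≤ h ≤ g - 2
  have A : ∀ h : ℕ, 1 ≤ h → h + 2 ≤ g → ∀ (k : ℕ) (P : Finset (Fin n)), Pᶜ.card = k →
      (2*((g:ℚ) - h) - 1) * e h P = ∑ i ∈ Pᶜ, c i := by
    intro h hh1 hh2 k
    have hhQ : (h:ℚ) + 2 ≤ g := by exact_mod_cast hh2
    induction k with
    | zero =>
      intro P hP
      have hPe : Pᶜ = ∅ := Finset.card_eq_zero.mp hP
      have H := h3 h P hh1 (by omega) (by omega)
      rw [hcard, hPe] at H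
      simp only [Finset.sum_empty, Finset.card_empty, Nat.cast_zero] at H
      have h0 : e h P = 0 := by
        have : (2 - 2*((g:ℚ) - h)) * e h P = 0 := by linarith
        rcases mul_eq_zero.mp this with h' | h'
        · linarith
        · exact h'
      rw [hPe, h0]; simp
    | succ k ih =>
      intro P hP
      have H := h3 h P hh1 (by omega) (by omega)
      rw [hcard, hP] at H
      have hs : (2*((g:ℚ) - h) - 1) * ∑ j ∈ Pᶜ, e h (insert j P) = k * ∑ i ∈ Pᶜ, c i := by
        rw [Finset.mul_sum]
        have : ∀ j ∈ Pᶜ, (2*((g:ℚ) - h) - 1) * e h (insert j P) = ∑ i ∈ Pᶜ, c i - c j := by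
          intro j hj
          rw [ih (insert j P) (by rw [hins P j hj, Finset.card_erase_of_mem hj, hP]; rfl),
            hins P j hj, Finset.sum_erase_eq_sub hj]
        rw [Finset.sum_congr rfl this, Finset.sum_sub_distrib, Finset.sum_const, hP]
        simp only [nsmul_eq_mul]
        push_cast
        ring
      push_cast at H
      have hk : (0:ℚ) ≤ k := Nat.cast_nonneg k
      have : (2*((g:ℚ) - h) - 1 + k) * ((2*((g:ℚ) - h) - 1) * e h P - ∑ i ∈ Pᶜ, c i) = 0 := by
        linear_combination hs - (2*((g:ℚ) - h) - 1) * H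
      rcases mul_eq_zero.mp this with h' | h'
      · linarith
      · linarith
  -- values at h = g - 1
  have B : ∀ P : Finset (Fin n), (2*(g:ℚ) - 3) * e (g-1) P = ∑ i ∈ P, c i := by
    intro P
    have := A 1 le_rfl (by omega) _ Pᶜ rfl
    rw [compl_compl] at this
    have hs := hsym (g-1) (by omega) P
    rw [show g - (g-1) = 1 by omega] at hs
    rw [hs, ← this]
    push_cast
    ring
  have C : ∀ i, c i = 0 := by
    intro i
    have H := h3 (g-1) ({i}ᶜ) (by omega) le_rfl (by
      rintro ⟨_, h'⟩
      have : i ∈ ({i}ᶜ : Finset (Fin n)) := by rw [h']; exact Finset.mem_univ i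
      simp at this)
    rw [hcard, compl_compl] at H
    simp only [Finset.sum_singleton, Finset.card_singleton] at H
    rw [Nat.cast_sub (by omega)] at H
    push_cast at H
    have b1 := B ({i}ᶜ)
    have b2 := B (insert i ({i}ᶜ))
    rw [Finset.sum_insert (by simp)] at b2
    have : (2*(g:ℚ) - 2) * c i = 0 := by
      linear_combination (2*(g:ℚ) - 3) * H + b1 - b2
    rcases mul_eq_zero.mp this with h' | h'
    · linarith
    · exact h'
  have D : ∀ (k : ℕ) (P : Finset (Fin n)), Pᶜ.card = k → 2 ≤ P.card → e 0 P = 0 := by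
    intro k
    induction k with
    | zero =>
      intro P hP hP2
      have H := h2 P hP2
      rw [hcard, Finset.card_eq_zero.mp hP] at H
      simp only [C, Finset.sum_const_zero, Finset.sum_empty, Finset.card_empty,
        Nat.cast_zero] at H
      have : (2 - 2*(g:ℚ)) * e 0 P = 0 := by linarith
      rcases mul_eq_zero.mp this with h' | h'
      · linarith
      · exact h'
    | succ k ih =>
      intro P hP hP2
      have H := h2 P hP2
      have hz : ∑ j ∈ Pᶜ, e 0 (insert j P) = 0 := by
        apply Finset.sum_eq_zero
        intro j hj
        refine ih _ (by rw [hins P j hj, Finset.card_erase_of_mem hj, hP]; rfl) ?_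
        exact hP2.trans (Finset.card_le_card (Finset.subset_insert _ _))
      rw [hcard, hP, hz] at H
      simp only [C, Finset.sum_const_zero] at H
      push_cast at H
      have hk : (0:ℚ) ≤ k := Nat.cast_nonneg k
      have : (2 - 2*(g:ℚ) - (k+1)) * e 0 P = 0 := by linarith
      rcases mul_eq_zero.mp this with h' | h'
      · linarith
      · exact h'
  refine ⟨C, ?_⟩
  intro h P hle h0 hgP
  by_cases e0 : h = 0
  · subst e0
    exact D _ P rfl (h0 rfl)
  by_cases eg : h = g
  · rw [hsym h hle, eg, Nat.sub_self]
    exact D _ _ rfl (hgP eg)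
  by_cases eg1 : h = g - 1
  · have b := B P
    simp only [C, Finset.sum_const_zero] at b
    rw [eg1]
    rcases mul_eq_zero.mp b with h' | h'
    · linarith
    · exact h'
  · have hh2 : h + 2 ≤ g := by omega
    have hhQ : (h:ℚ) + 2 ≤ g := by exact_mod_cast hh2
    have a := A h (by omega) hh2 _ P rfl
    simp only [C, Finset.sum_const_zero] at a
    rcases mul_eq_zero.mp a with h' | h'
    · linarith
    · exact h'
end

section
/- Let g ≥ 3 and n ≥ 1 be integers. Suppose given rational numbers a, b, c_1,…,c_n, and a rational number e(h,P) for every pair (h,P) with 0 ≤ h ≤ g and P ⊆ {1,…,n} such that |P| ≥ 2 if h = 0 and |P^c| ≥ 2 if h = g, satisfying the symmetry e(h,P) = e(g−h,P^c). Assume that: (i) for every i ∈ {1,…,n}: (2g−2)·c_i + Σ_{j≠i} e(0,{i,j}) = 0; (ii) for every P ⊆ {1,…,n} with |P| ≥ 2: (2g−2)·Σ_{i∈P} c_i + (2 − 2g − (n−|P|))·e(0,P) + Σ_{j∉P} e(0,P∪{j}) = 0; (iii) for every pair (h,P) with 1 ≤ h ≤ g−1, P ⊆ {1,…,n}, and (h,P)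 ≠ (g−1,{1,…,n}): Σ_{i∉P} c_i + (2 − 2(g−h) − (n−|P|))·e(h,P) + Σ_{j∉P} e(h,P∪{j}) = 0; (iv) a/24 + b/2 − e(1,∅)/24 = 0; (v) e(1,∅) − b = 0. Then a = 0, b = 0, c_i = 0 for all i, and e(h,P) = 0 for all (h,P). -/
open Finset

/-- No nonzero divisor class `a·λ₁ + b·δ_irr + Σ cᵢ Kᵢ + Σ e(h,P) δ_h^P` pairs to zero
with all the test curves `Zᵢ`, `Z_h^P`, `E`, `Z_irr`. -/
theorem stmt_8 (g n : ℕ) (hg : 3 ≤ g) (hn : 1 ≤ n)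
    (a b : ℚ) (c : Fin n → ℚ) (e : ℕ → Finset (Fin n) → ℚ)
    (hsym : ∀ h ≤ g, ∀ P : Finset (Fin n), e h P = e (g - h) Pᶜ)
    (h1 : ∀ i : Fin n,
      (2*(g:ℚ) - 2) * c i + ∑ j ∈ univ \ {i}, e 0 {i, j} = 0)
    (h2 : ∀ P : Finset (Fin n), 2 ≤ P.card →
      (2*(g:ℚ) - 2) * ∑ i ∈ P, c i
        + (2 - 2*(g:ℚ) - ((n:ℚ) - (P.card : ℚ))) * e 0 P
        + ∑ j ∈ Pᶜ, e 0 (insert j P) = 0)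
    (h3 : ∀ (h : ℕ) (P : Finset (Fin n)), 1 ≤ h → h ≤ g - 1 →
      ¬(h = g - 1 ∧ P = univ) →
      ∑ i ∈ Pᶜ, c i
        + (2 - 2*((g:ℚ) - (h:ℚ)) - ((n:ℚ) - (P.card : ℚ))) * e h P
        + ∑ j ∈ Pᶜ, e h (insert j P) = 0)
    (h4 : a / 24 + b / 2 - e 1 ∅ / 24 = 0)
    (h5 : e 1 ∅ - b = 0) :
    a = 0 ∧ b = 0 ∧ (∀ i, c i = 0) ∧
    ∀ (h : ℕ) (P : Finset (Fin n)), h ≤ g → (h = 0 → 2 ≤ P.card) →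
      (h = g → 2 ≤ Pᶜ.card) → e h P = 0 := by
  have hgq : (3:ℚ) ≤ g := by exact_mod_cast hg
  have hcard : ∀ P : Finset (Fin n), (n:ℚ) - (P.card:ℚ) = (Pᶜ.card : ℚ) := by
    intro P
    have := Finset.card_add_card_compl P
    rw [Fintype.card_fin] at this
    have h' : (P.card : ℚ) + (Pᶜ.card : ℚ) = n := by exact_mod_cast this
    linarith
  have hcc : ∀ (P : Finset (Fin n)) (j : Fin n), j ∈ Pᶜ →
      (insert j P)ᶜ.card + 1 = Pᶜ.card := by
    intro P j hj
    rw [Finset.compl_insert]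
    exact Finset.card_erase_add_one hj
  -- closed form of `e 0 P`
  have key : ∀ (m : ℕ) (P : Finset (Fin n)), Pᶜ.card = m → 2 ≤ P.card →
      (2*(g:ℚ) - 1) * e 0 P = (2*(g:ℚ) - 1) * ∑ i ∈ P, c i + ∑ i ∈ Pᶜ, c i := by
    intro m
    induction m with
    | zero =>
      intro P hP hP2
      have h := h2 P hP2
      have hPe : Pᶜ = ∅ := Finset.card_eq_zero.mp hP
      rw [hcard, hPe] at h
      rw [hPe]
      simp only [Finset.card_empty, Finset.sum_empty, Nat.cast_zero] at h ⊢
      have : (2*(g:ℚ) - 2) * (∑ i ∈ P, c i - e 0 P) = 0 := by linarith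
      rcases mul_eq_zero.mp this with h' | h'
      · linarith
      · have : e 0 P = ∑ i ∈ P, c i := by linarith
        rw [this]; ring
    | succ m ih =>
      intro P hP hP2
      have h := h2 P hP2
      rw [hcard, hP] at h
      have hs : (2*(g:ℚ) - 1) * ∑ j ∈ Pᶜ, e 0 (insert j P)
          = ∑ j ∈ Pᶜ, ((2*(g:ℚ) - 1) * ∑ i ∈ P, c i + ∑ i ∈ Pᶜ, c i
              + (2*(g:ℚ) - 2) * c j) := by
        rw [Finset.mul_sum]
        refine Finset.sum_congr rfl fun j hj => ?_
        have hjP : j ∉ P := Finset.mem_compl.mp hj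
        rw [ih (insert j P) (by have := hcc P j hj; omega)
          (by rw [Finset.card_insert_of_notMem hjP]; omega),
          Finset.sum_insert hjP, Finset.compl_insert]
        have := Finset.add_sum_erase Pᶜ c hj
        linear_combination this
      rw [Finset.sum_add_distrib, Finset.sum_const, hP, ← Finset.mul_sum, nsmul_eq_mul] at hs
      push_cast at h hs
      have hne : (2*(g:ℚ) - 2 + (m + 1)) ≠ 0 := by
        have : (0:ℚ) ≤ m := Nat.cast_nonneg m
        intro h0; linarith
      apply mul_left_cancel₀ hne
      linear_combination (-(2*(g:ℚ) - 1)) * h + hs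
  have hc0 : ∀ i, (2*(g:ℚ) - 2) * c i + ∑ j, c j = 0 := by
    intro i
    have h := h1 i
    have hmem : i ∈ (univ : Finset (Fin n)) := Finset.mem_univ i
    have hcs : ((univ \ {i} : Finset (Fin n)).card : ℚ) = n - 1 := by
      rw [← Finset.erase_eq, Finset.card_erase_of_mem hmem, Finset.card_univ, Fintype.card_fin]
      push_cast [hn]; ring
    have hsm : ∑ j ∈ univ \ {i}, c j = ∑ j, c j - c i := by
      rw [← Finset.erase_eq]
      have := Finset.add_sum_erase univ c hmem
      linarith
    have hs : (2*(g:ℚ) - 1) * ∑ j ∈ univ \ {i}, e 0 {i, j}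
        = ∑ j ∈ univ \ {i}, ((2*(g:ℚ) - 2) * c i + ∑ j, c j + (2*(g:ℚ) - 2) * c j) := by
      rw [Finset.mul_sum]
      refine Finset.sum_congr rfl fun j hj => ?_
      have hij : i ≠ j := by
        rintro rfl; simp at hj
      rw [key _ {i, j} rfl (by rw [Finset.card_pair hij])]
      have h' := Finset.sum_add_sum_compl {i, j} c
      rw [Finset.sum_pair hij] at h' ⊢
      linear_combination h'
    rw [Finset.sum_add_distrib, Finset.sum_const, ← Finset.mul_sum, nsmul_eq_mul, hcs, hsm] at hs
    have hnq : (1:ℚ) ≤ n := by exact_mod_cast hn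
    have hne : (2*(g:ℚ) + n - 3) ≠ 0 := by
      intro h0; linarith
    apply mul_left_cancel₀ hne
    linear_combination (2*(g:ℚ) - 1) * h - hs
  have hC : ∑ j, c j = 0 := by
    have h : ∑ i : Fin n, ((2*(g:ℚ) - 2) * c i + ∑ j, c j) = 0 :=
      Finset.sum_eq_zero fun i _ => hc0 i
    rw [Finset.sum_add_distrib, Finset.sum_const, ← Finset.mul_sum, nsmul_eq_mul,
      Finset.card_univ, Fintype.card_fin] at h
    have hnq : (1:ℚ) ≤ n := by exact_mod_cast hn
    have : (2*(g:ℚ) - 2 + n) * ∑ j, c j = 0 := by linear_combination h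
    rcases mul_eq_zero.mp this with h' | h'
    · linarith
    · exact h'
  have hc : ∀ i, c i = 0 := by
    intro i
    have h := hc0 i
    rw [hC, add_zero] at h
    rcases mul_eq_zero.mp h with h' | h'
    · linarith
    · exact h'
  have he0 : ∀ P : Finset (Fin n), 2 ≤ P.card → e 0 P = 0 := by
    intro P hP
    have h := key _ P rfl hP
    simp only [hc, Finset.sum_const_zero, mul_zero, add_zero] at h
    rcases mul_eq_zero.mp h with h' | h'
    · linarith
    · exact h'
  have hmid : ∀ h : ℕ, 1 ≤ h → h + 2 ≤ g → ∀ (m : ℕ) (P : Finset (Fin n)), Pᶜ.card = m →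
      e h P = 0 := by
    intro h hh1 hh2 m
    induction m using Nat.strong_induction_on with
    | _ m ih =>
      intro P hP
      have h' := h3 h P hh1 (by omega) (by rintro ⟨h, -⟩; omega)
      have hs : ∑ j ∈ Pᶜ, e h (insert j P) = 0 :=
        Finset.sum_eq_zero fun j hj =>
          ih _ (by have := hcc P j hj; omega) (insert j P) rfl
      rw [hs, hcard] at h'
      simp only [hc, Finset.sum_const_zero, zero_add, add_zero] at h'
      have hq : (h:ℚ) + 2 ≤ g := by exact_mod_cast hh2
      have hp : (0:ℚ) ≤ (Pᶜ.card : ℚ) := Nat.cast_nonneg _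
      rcases mul_eq_zero.mp h' with h' | h'
      · linarith
      · exact h'
  have he1 : e 1 ∅ = 0 := hmid 1 le_rfl (by omega) _ ∅ rfl
  have hb : b = 0 := by linarith
  refine ⟨by rw [hb, he1] at h4; linarith, hb, hc, ?_⟩
  intro h P hhg hh0 hhg'
  by_cases hz : h = 0
  · subst hz; exact he0 P (hh0 rfl)
  by_cases hz' : h = g
  · rw [hsym h hhg, hz', Nat.sub_self]
    exact he0 _ (hhg' hz')
  by_cases hz2 : h + 2 ≤ g
  · exact hmid h (by omega) hz2 _ P rfl
  · rw [hsym h hhg]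
    exact hmid (g - h) (by omega) (by omega) _ _ rfl
end

section
/- Let g ≥ 3 and n ≥ 1 be integers and let d_1,…,d_n be integers with d_1+⋯+d_n = 0. Consider rational numbers c_1,…,c_n, and a rational number e(h,P) for every pair (h,P) with 0 ≤ h ≤ g and P ⊆ {1,…,n} such that |P| ≥ 2 if h = 0 and |P^c| ≥ 2 if h = g, satisfying the symmetry e(h,P) = e(g−h,P^c). Then the system of linear equations — (i) for every i ∈ {1,…,n}: (2g−2)·c_i + Σ_{j≠i} e(0,{i,j}) = g·d_i²; (ii) for every P ⊆ {1,…,n} with |P| ≥ 2: (2g−2)·Σ_{i∈P} c_i + (2 − 2g − (n−|P|))·e(0,P) + Σ_{j∉P} e(0,P∪{j}) = g·d_P²; (iii) for every pair (h,P) with 1 ≤ h ≤ g−1, P ⊆ {1,…,n}, and (h,P) ≠ (g−1,{1,…,n}): Σ_{i∉P} c_i + (2 − 2(g−h) − (n−|P|))·e(h,P) + Σ_{j∉P} e(h,P∪{j}) = (g−h)·d_P² — has exactly one solution, namely c_i = d_i²/2 for all i, e(0,P) = −(d_P² − Σ_{i∈P} d_i²)/2, and e(h,P) = −d_P²/2 for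 1 ≤ h ≤ g−1 (with e(g,P) = e(0,P^c) determined by symmetry). -/
open Finset

lemma aux_compl_sum {n : ℕ} (d : Fin n → ℤ) (hd : ∑ i, d i = 0) (P : Finset (Fin n)) :
    ∑ i ∈ Pᶜ, (d i : ℚ) = -∑ i ∈ P, (d i : ℚ) := by
  have h := Finset.sum_add_sum_compl P (fun i => (d i : ℚ))
  have h2 : ∑ i, (d i : ℚ) = 0 := by exact_mod_cast hd
  linarith

lemma aux_card {n : ℕ} (P : Finset (Fin n)) : ((Pᶜ).card : ℚ) = (n : ℚ) - P.card := by
  have h := Finset.card_add_card_compl P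
  rw [Fintype.card_fin] at h
  have : (P.card : ℚ) + (Pᶜ).card = n := by exact_mod_cast h
  linarith

/-- The canonical solution satisfies the equations. -/
lemma aux_back (g n : ℕ) (d : Fin n → ℤ)
    (hd : ∑ i, d i = 0)
    (c : Fin n → ℚ) (e : ℕ → Finset (Fin n) → ℚ)
    (hc : ∀ i : Fin n, c i = (d i : ℚ)^2 / 2)
    (h0 : ∀ P : Finset (Fin n), 2 ≤ P.card →
        e 0 P = -((∑ i ∈ P, (d i : ℚ))^2 - ∑ i ∈ P, (d i : ℚ)^2) / 2)
    (h1 : ∀ (h : ℕ) (P : Finset (Fin n)), 1 ≤ h → h ≤ g - 1 →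
        e h P = -(∑ i ∈ P, (d i : ℚ))^2 / 2) :
    (∀ i : Fin n,
        (2*(g:ℚ) - 2) * c i + ∑ j ∈ univ \ {i}, e 0 {i, j}
          = (g:ℚ) * (d i : ℚ)^2) ∧
     (∀ P : Finset (Fin n), 2 ≤ P.card →
        (2*(g:ℚ) - 2) * ∑ i ∈ P, c i
          + (2 - 2*(g:ℚ) - ((n:ℚ) - (P.card : ℚ))) * e 0 P
          + ∑ j ∈ Pᶜ, e 0 (insert j P)
          = (g:ℚ) * (∑ i ∈ P, (d i : ℚ))^2) ∧
     (∀ (h : ℕ) (P : Finset (Fin n)), 1 ≤ h → h ≤ g - 1 →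
        ∑ i ∈ Pᶜ, c i
          + (2 - 2*((g:ℚ) - (h:ℚ)) - ((n:ℚ) - (P.card : ℚ))) * e h P
          + ∑ j ∈ Pᶜ, e h (insert j P)
          = ((g:ℚ) - (h:ℚ)) * (∑ i ∈ P, (d i : ℚ))^2) := by
  refine ⟨?_, ?_, ?_⟩
  · intro i
    have : ∑ j ∈ univ \ {i}, e 0 {i, j} = ∑ j ∈ ({i} : Finset (Fin n))ᶜ, -(d i : ℚ) * d j := by
      rw [← Finset.compl_eq_univ_sdiff]
      refine Finset.sum_congr rfl fun j hj => ?_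
      have hij : i ≠ j := by
        rintro rfl
        simp at hj
      rw [h0 _ (by rw [Finset.card_pair hij]), Finset.sum_pair hij, Finset.sum_pair hij]
      ring
    rw [this, ← Finset.mul_sum, aux_compl_sum d hd, Finset.sum_singleton, hc]
    ring
  · intro P hP
    have : ∑ j ∈ Pᶜ, e 0 (insert j P) = ∑ j ∈ Pᶜ, (e 0 P + -(∑ i ∈ P, (d i : ℚ)) * d j) := by
      refine Finset.sum_congr rfl fun j hj => ?_
      have hj' : j ∉ P := by simpa using hj
      rw [h0 _ hP, h0 _ (by rw [Finset.card_insert_of_notMem hj']; omega),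
        Finset.sum_insert hj', Finset.sum_insert hj']
      ring
    rw [this, Finset.sum_add_distrib, ← Finset.mul_sum, aux_compl_sum d hd, Finset.sum_const,
      nsmul_eq_mul, aux_card, h0 P hP, Finset.sum_congr rfl (fun i _ => hc i), ← Finset.sum_div]
    ring
  · intro h P hh hh'
    have : ∑ j ∈ Pᶜ, e h (insert j P)
        = ∑ j ∈ Pᶜ, (e h P + -(∑ i ∈ P, (d i : ℚ)) * d j + - c j) := by
      refine Finset.sum_congr rfl fun j hj => ?_
      have hj' : j ∉ P := by simpa using hj
      rw [h1 h _ hh hh', h1 h _ hh hh', Finset.sum_insert hj', hc]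
      ring
    rw [this, Finset.sum_add_distrib, Finset.sum_add_distrib, ← Finset.mul_sum,
      aux_compl_sum d hd, Finset.sum_const, nsmul_eq_mul, aux_card, h1 h P hh hh',
      Finset.sum_neg_distrib]
    ring

lemma aux_down {n : ℕ} (Q : Finset (Fin n) → Prop)
    (step : ∀ P, (∀ j ∈ Pᶜ, Q (insert j P)) → Q P) : ∀ P, Q P := by
  have key : ∀ (m : ℕ) (P : Finset (Fin n)), (Pᶜ).card = m → Q P := by
    intro m
    induction m with
    | zero =>
      intro P hP
      refine step P fun j hj => ?_
      rw [Finset.card_eq_zero.mp hP] at hj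
      simp at hj
    | succ m ih =>
      intro P hP
      refine step P fun j hj => ih _ ?_
      rw [Finset.compl_insert, Finset.card_erase_of_mem hj, hP]
      rfl
  exact fun P => key _ P rfl

/-- The homogeneous system has only the trivial solution. -/
lemma aux_homog (g n : ℕ) (hg : 3 ≤ g)
    (c : Fin n → ℚ) (e : ℕ → Finset (Fin n) → ℚ)
    (hsym : ∀ P : Finset (Fin n), e 1 P = e (g - 1) Pᶜ)
    (h2 : ∀ P : Finset (Fin n), 2 ≤ P.card →
        (2*(g:ℚ) - 2) * ∑ i ∈ P, c i
          + (2 - 2*(g:ℚ) - ((n:ℚ) - (P.card : ℚ))) * e 0 P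
          + ∑ j ∈ Pᶜ, e 0 (insert j P) = 0)
    (h3 : ∀ (h : ℕ) (P : Finset (Fin n)), 1 ≤ h → h ≤ g - 1 →
        ¬(h = g - 1 ∧ P = univ) →
        ∑ i ∈ Pᶜ, c i
          + (2 - 2*((g:ℚ) - (h:ℚ)) - ((n:ℚ) - (P.card : ℚ))) * e h P
          + ∑ j ∈ Pᶜ, e h (insert j P) = 0) :
    (∀ i, c i = 0) ∧ (∀ P : Finset (Fin n), 2 ≤ P.card → e 0 P = 0) ∧
      (∀ (h : ℕ) (P : Finset (Fin n)), 1 ≤ h → h ≤ g - 1 → e h P = 0) := by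
  have hgq : (3:ℚ) ≤ g := by exact_mod_cast hg
  have A : ∀ h : ℕ, 1 ≤ h → h + 2 ≤ g → ∀ P : Finset (Fin n),
      (2 * ((g:ℚ) - h) - 1) * e h P = ∑ i ∈ Pᶜ, c i := by
    intro h hh hh2
    have hq : (h:ℚ) + 2 ≤ g := by exact_mod_cast hh2
    apply aux_down
    intro P ih
    have E := h3 h P hh (by omega) (by omega)
    have S : (2 * ((g:ℚ) - h) - 1) * ∑ j ∈ Pᶜ, e h (insert j P)
        = ((n:ℚ) - P.card - 1) * ∑ i ∈ Pᶜ, c i := by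
      rw [Finset.mul_sum]
      have : ∀ j ∈ Pᶜ, (2 * ((g:ℚ) - h) - 1) * e h (insert j P) = ∑ i ∈ Pᶜ, c i - c j := by
        intro j hj
        rw [ih j hj, Finset.compl_insert, ← Finset.sum_erase_add _ _ hj]
        ring
      rw [Finset.sum_congr rfl this, Finset.sum_sub_distrib, Finset.sum_const, nsmul_eq_mul,
        aux_card]
      ring
    have hm : (0:ℚ) ≤ (n:ℚ) - P.card := by rw [← aux_card]; positivity
    have hne : 2 * ((g:ℚ) - h) + ((n:ℚ) - P.card) - 2 ≠ 0 := by
      apply ne_of_gt; linarith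
    apply mul_left_cancel₀ hne
    linear_combination (-(2 * ((g:ℚ) - h) - 1)) * E + S
  have B : ∀ P : Finset (Fin n), (2 * (g:ℚ) - 3) * e (g - 1) P = ∑ i ∈ P, c i := by
    intro P
    have := A 1 le_rfl (by omega) Pᶜ
    rw [hsym, compl_compl] at this
    rw [← this]
    push_cast
    ring
  have hc : ∀ i, c i = 0 := by
    intro i
    have E := h3 (g-1) ({i}ᶜ) (by omega) le_rfl (by
      rintro ⟨-, h⟩
      have : i ∈ ({i}ᶜ : Finset (Fin n)) := h ▸ mem_univ i
      simp at this)
    rw [← aux_card, compl_compl, Nat.cast_sub (by omega), Finset.sum_singleton,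
      Finset.sum_singleton, Finset.card_singleton] at E
    have B1 := B ({i}ᶜ)
    have B2 := B (insert i {i}ᶜ)
    rw [Finset.sum_insert (by simp)] at B2
    have hne : 2 * (g:ℚ) - 2 ≠ 0 := by apply ne_of_gt; linarith
    apply mul_left_cancel₀ hne
    push_cast at E
    linear_combination (2 * (g:ℚ) - 3) * E + B1 - B2
  refine ⟨hc, ?_, ?_⟩
  · apply aux_down (fun P => 2 ≤ P.card → e 0 P = 0)
    intro P ih hP
    have E := h2 P hP
    rw [Finset.sum_eq_zero (fun i _ => hc i), Finset.sum_eq_zero (s := Pᶜ)] at E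
    · have hm : (0:ℚ) ≤ (n:ℚ) - P.card := by rw [← aux_card]; positivity
      have hne : 2 - 2*(g:ℚ) - ((n:ℚ) - (P.card : ℚ)) ≠ 0 := by
        apply ne_of_lt; linarith
      apply mul_left_cancel₀ hne
      linear_combination E
    · intro j hj
      exact ih j hj (hP.trans (Finset.card_le_card (Finset.subset_insert _ _)))
  · intro h P hh hh'
    by_cases hlt : h + 2 ≤ g
    · have hq : (h:ℚ) + 2 ≤ g := by exact_mod_cast hlt
      have E := A h hh hlt P
      rw [Finset.sum_eq_zero (fun i _ => hc i)] at E
      exact (mul_eq_zero.mp E).resolve_left (by apply ne_of_gt; linarith)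
    · have : h = g - 1 := by omega
      subst this
      have E := B P
      rw [Finset.sum_eq_zero (fun i _ => hc i)] at E
      exact (mul_eq_zero.mp E).resolve_left (by apply ne_of_gt; linarith)



/-- Combinatorial form of the main theorem in degree zero: the system of intersection
equations with the test curves `Zᵢ`, `Z_h^P` has the coefficients of `[s_d^*T]` as its
unique solution. -/
theorem stmt_9 (g n : ℕ) (hg : 3 ≤ g) (hn : 1 ≤ n) (d : Fin n → ℤ)
    (hd : ∑ i, d i = 0)
    (c : Fin n → ℚ) (e : ℕ → Finset (Fin n) → ℚ)
    (hsym : ∀ h ≤ g, ∀ P : Finset (Fin n), e h P = e (g - h) Pᶜ) :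
    ((∀ i : Fin n,
        (2*(g:ℚ) - 2) * c i + ∑ j ∈ univ \ {i}, e 0 {i, j}
          = (g:ℚ) * (d i : ℚ)^2) ∧
     (∀ P : Finset (Fin n), 2 ≤ P.card →
        (2*(g:ℚ) - 2) * ∑ i ∈ P, c i
          + (2 - 2*(g:ℚ) - ((n:ℚ) - (P.card : ℚ))) * e 0 P
          + ∑ j ∈ Pᶜ, e 0 (insert j P)
          = (g:ℚ) * (∑ i ∈ P, (d i : ℚ))^2) ∧
     (∀ (h : ℕ) (P : Finset (Fin n)), 1 ≤ h → h ≤ g - 1 →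
        ¬(h = g - 1 ∧ P = univ) →
        ∑ i ∈ Pᶜ, c i
          + (2 - 2*((g:ℚ) - (h:ℚ)) - ((n:ℚ) - (P.card : ℚ))) * e h P
          + ∑ j ∈ Pᶜ, e h (insert j P)
          = ((g:ℚ) - (h:ℚ)) * (∑ i ∈ P, (d i : ℚ))^2))
    ↔
    ((∀ i : Fin n, c i = (d i : ℚ)^2 / 2) ∧
     (∀ P : Finset (Fin n), 2 ≤ P.card →
        e 0 P = -((∑ i ∈ P, (d i : ℚ))^2 - ∑ i ∈ P, (d i : ℚ)^2) / 2) ∧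
     (∀ (h : ℕ) (P : Finset (Fin n)), 1 ≤ h → h ≤ g - 1 →
        e h P = -(∑ i ∈ P, (d i : ℚ))^2 / 2)) := by
  constructor
  · rintro ⟨-, H2, H3⟩
    let c' : Fin n → ℚ := fun i => (d i : ℚ)^2 / 2
    let e' : ℕ → Finset (Fin n) → ℚ := fun h P =>
      if h = 0 then -((∑ i ∈ P, (d i : ℚ))^2 - ∑ i ∈ P, (d i : ℚ)^2) / 2
      else -(∑ i ∈ P, (d i : ℚ))^2 / 2
    have he' : ∀ (h : ℕ) (P : Finset (Fin n)), 1 ≤ h →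
        e' h P = -(∑ i ∈ P, (d i : ℚ))^2 / 2 := by
      intro h P hh
      have : h ≠ 0 := by omega
      simp [e', this]
    obtain ⟨-, K2, K3⟩ := aux_back g n d hd c' e' (fun i => rfl) (fun P _ => by simp [e'])
      (fun h P hh _ => he' h P hh)
    obtain ⟨R1, R2, R3⟩ := aux_homog g n hg (fun i => c i - c' i) (fun h P => e h P - e' h P)
      (by
        intro P
        show e 1 P - e' 1 P = e (g-1) Pᶜ - e' (g-1) Pᶜ
        rw [hsym 1 (by omega) P, he' 1 P le_rfl, he' (g-1) _ (by omega), aux_compl_sum d hd]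
        ring)
      (by
        intro P hP
        rw [Finset.sum_sub_distrib, Finset.sum_sub_distrib]
        linear_combination H2 P hP - K2 P hP)
      (by
        intro h P hh hh' hne
        rw [Finset.sum_sub_distrib, Finset.sum_sub_distrib]
        linear_combination H3 h P hh hh' hne - K3 h P hh hh')
    refine ⟨fun i => sub_eq_zero.mp (R1 i), fun P hP => ?_, fun h P hh hh' => ?_⟩
    · rw [sub_eq_zero.mp (R2 P hP)]
      simp [e']
    · rw [sub_eq_zero.mp (R3 h P hh hh'), he' h P hh]
  · rintro ⟨hc, h0, h1⟩
    obtain ⟨K1, K2, K3⟩ := aux_back g n d hd c e hc h0 h1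
    exact ⟨K1, K2, fun h P hh hh' _ => K3 h P hh hh'⟩
end

section
/- Let g ≥ 3 and n ≥ 1 be integers and let d_1,…,d_n be integers with d_1+⋯+d_n = g−1. Consider rational numbers c_1,…,c_n, and a rational number e(h,P) for every pair (h,P) with 0 ≤ h ≤ g and P ⊆ {1,…,n} such that |P| ≥ 2 if h = 0 and |P^c| ≥ 2 if h = g, satisfying the symmetry e(h,P) = e(g−h,P^c). Then the system of linear equations — (i) for every i ∈ {1,…,n}: (2g−2)·c_i + Σ_{j≠i} e(0,{i,j}) = g·d_i²; (ii) for every P ⊆ {1,…,n} with |P| ≥ 2: (2g−2)·Σ_{i∈P} c_i + (2 − 2g − (n−|P|))·e(0,P) + Σ_{j∉P} e(0,P∪{j}) = g·d_P²; (iii) for every pair (h,P) with 1 ≤ h ≤ g−1, P ⊆ {1,…,n}, and (h,P) ≠ (g−1,{1,…,n}): Σ_{i∉P} c_i + (2 − 2(g−h) − (n−|P|))·e(h,P) + Σ_{j∉P} e(h,P∪{j}) = (g−h)·(d_P−h)² — has exactly one solution, namely c_i = d_i(d_i+1)/2 for all i, e(0,P) = −(d_P² − Σ_{i∈P} d_i²)/2,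 and e(h,P) = −(d_P−h)(d_P−h+1)/2 for 1 ≤ h ≤ g−1 (with e(g,P) = e(0,P^c) determined by symmetry). -/
open Finset

/-- Homogeneous system: the part with `1 ≤ h ≤ g - 1`. -/
lemma hom_pos (g n : ℕ) (hg : 3 ≤ g) (c : Fin n → ℚ) (e : ℕ → Finset (Fin n) → ℚ)
    (hsym : ∀ h, 1 ≤ h → h ≤ g - 1 → ∀ P : Finset (Fin n), e h P = e (g - h) Pᶜ)
    (h3 : ∀ (h : ℕ) (P : Finset (Fin n)), 1 ≤ h → h ≤ g - 1 →
        ¬(h = g - 1 ∧ P = univ) →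
        ∑ i ∈ Pᶜ, c i
          + (2 - 2*((g:ℚ) - (h:ℚ)) - ((n:ℚ) - (P.card : ℚ))) * e h P
          + ∑ j ∈ Pᶜ, e h (insert j P) = 0) :
    (∀ i, c i = 0) ∧ ∀ (h : ℕ) (P : Finset (Fin n)), 1 ≤ h → h ≤ g - 1 → e h P = 0 := by
  have hcard : ∀ P : Finset (Fin n), ((Pᶜ.card : ℕ) : ℚ) = (n : ℚ) - P.card := by
    intro P
    have := Finset.card_add_card_compl P
    rw [Fintype.card_fin] at this
    have h' : (P.card : ℚ) + Pᶜ.card = n := by exact_mod_cast this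
    linarith
  have key : ∀ (m : ℕ) (h : ℕ) (P : Finset (Fin n)), 1 ≤ h → h + 2 ≤ g → Pᶜ.card = m →
      (2 * ((g:ℚ) - h) - 1) * e h P = ∑ i ∈ Pᶜ, c i := by
    intro m
    induction m with
    | zero =>
      intro h P hh hhg hP
      have hP' : Pᶜ = ∅ := Finset.card_eq_zero.mp hP
      have := h3 h P hh (by omega) (by omega)
      have hc := hcard P
      rw [← hc, hP, hP'] at this
      have hq : (h : ℚ) + 2 ≤ g := by exact_mod_cast hhg
      simp only [Finset.sum_empty] at this ⊢
      have : e h P = 0 := by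
        have h' : (2 - 2 * ((g:ℚ) - h)) * e h P = 0 := by push_cast at this; linarith
        rcases mul_eq_zero.mp h' with h' | h'
        · linarith
        · exact h'
      rw [this, hP', Finset.sum_empty, mul_zero]
    | succ m ih =>
      intro h P hh hhg hP
      have heq := h3 h P hh (by omega) (by omega)
      have hc := hcard P
      have hq : (h : ℚ) + 2 ≤ g := by exact_mod_cast hhg
      have hs : ∑ j ∈ Pᶜ, (2 * ((g:ℚ) - h) - 1) * e h (insert j P)
          = ∑ j ∈ Pᶜ, ((∑ i ∈ Pᶜ, c i) - c j) := by
        apply Finset.sum_congr rfl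
        intro j hj
        have hco : (insert j P)ᶜ = Pᶜ.erase j := by
          ext x; simp
        rw [ih h (insert j P) hh hhg (by rw [hco, Finset.card_erase_of_mem hj, hP]; rfl), hco,
          ← Finset.add_sum_erase _ _ hj]
        ring
      rw [← Finset.mul_sum, Finset.sum_sub_distrib, Finset.sum_const, nsmul_eq_mul, hc] at hs
      rw [hP] at hc
      push_cast at hc
      set C := ∑ i ∈ Pᶜ, c i
      set S := ∑ j ∈ Pᶜ, e h (insert j P)
      have hm : (0:ℚ) ≤ m := Nat.cast_nonneg m
      rw [← hc] at hs heq
      have : (2 * ((g:ℚ) - h) - 2 + (m + 1)) * ((2 * ((g:ℚ) - h) - 1) * e h P - C) = 0 := by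
        linear_combination (-(2 * ((g:ℚ) - h) - 1)) * heq + hs
      rcases mul_eq_zero.mp this with h' | h'
      · nlinarith
      · linarith
  have hgq : (3 : ℚ) ≤ g := by exact_mod_cast hg
  have top : ∀ P : Finset (Fin n), (2 * (g:ℚ) - 3) * e (g - 1) P = ∑ i ∈ P, c i := by
    intro P
    have := key _ 1 Pᶜ le_rfl (by omega) rfl
    rw [hsym 1 le_rfl (by omega) Pᶜ, compl_compl] at this
    rw [← this]; push_cast; ring
  have hc0 : ∀ i, c i = 0 := by
    intro i
    have heq := h3 (g - 1) ({i}ᶜ) (by omega) le_rfl (by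
      rintro ⟨-, h⟩
      have : i ∈ ({i}ᶜ : Finset (Fin n)) := by rw [h]; simp
      simp at this)
    have hc := hcard {i}ᶜ
    rw [← hc] at heq
    have hu : insert i ({i}ᶜ : Finset (Fin n)) = univ := by
      ext x; simp [em]
    simp only [compl_compl, Finset.sum_singleton, Finset.card_singleton, hu] at heq
    have t1 := top {i}ᶜ
    have t2 := top univ
    rw [← Finset.sum_add_sum_compl {i} c, Finset.sum_singleton] at t2
    rw [Nat.cast_sub (by omega)] at heq
    push_cast at heq
    have : (2 * (g:ℚ) - 2) * c i = 0 := by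
      linear_combination (2 * (g:ℚ) - 3) * heq + t1 - t2
    rcases mul_eq_zero.mp this with h' | h'
    · linarith
    · exact h'
  refine ⟨hc0, fun h P hh hhg => ?_⟩
  by_cases h' : h + 2 ≤ g
  · have := key _ h P hh h' rfl
    have hq : (h : ℚ) + 2 ≤ g := by exact_mod_cast h'
    simp only [hc0, Finset.sum_const_zero] at this
    rcases mul_eq_zero.mp this with h' | h'
    · linarith
    · exact h'
  · have : h = g - 1 := by omega
    subst this
    have := top P
    simp only [hc0, Finset.sum_const_zero] at this
    rcases mul_eq_zero.mp this with h' | h'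
    · linarith
    · exact h'

/-- Homogeneous system: the part with `h = 0`. -/
lemma hom_zero (g n : ℕ) (hg : 3 ≤ g) (f : Finset (Fin n) → ℚ)
    (h2 : ∀ P : Finset (Fin n), 2 ≤ P.card →
        (2 - 2*(g:ℚ) - ((n:ℚ) - (P.card : ℚ))) * f P + ∑ j ∈ Pᶜ, f (insert j P) = 0) :
    ∀ P : Finset (Fin n), 2 ≤ P.card → f P = 0 := by
  have hgq : (3 : ℚ) ≤ g := by exact_mod_cast hg
  have key : ∀ (m : ℕ) (P : Finset (Fin n)), 2 ≤ P.card → Pᶜ.card = m → f P = 0 := by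
    intro m
    induction m with
    | zero =>
      intro P h hP
      have := h2 P h
      have hc := Finset.card_add_card_compl P
      rw [Fintype.card_fin] at hc
      have hc' : (n : ℚ) - P.card = Pᶜ.card := by
        have h' : (P.card : ℚ) + Pᶜ.card = n := by exact_mod_cast hc
        linarith
      rw [Finset.card_eq_zero.mp hP, Finset.sum_empty, hc', hP] at this
      push_cast at this
      have h' : (2 - 2 * (g:ℚ)) * f P = 0 := by linarith
      rcases mul_eq_zero.mp h' with h' | h'
      · linarith
      · exact h'
    | succ m ih =>
      intro P h hP
      have := h2 P h
      have hc := Finset.card_add_card_compl P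
      rw [Fintype.card_fin] at hc
      have hc' : (n : ℚ) - P.card = Pᶜ.card := by
        have h' : (P.card : ℚ) + Pᶜ.card = n := by exact_mod_cast hc
        linarith
      rw [Finset.sum_eq_zero, hc', hP] at this
      · push_cast at this
        have hm : (0:ℚ) ≤ m := Nat.cast_nonneg m
        have h' : (2 - 2 * (g:ℚ) - (m + 1)) * f P = 0 := by linarith
        rcases mul_eq_zero.mp h' with h' | h'
        · linarith
        · exact h'
      · intro j hj
        have hco : (insert j P)ᶜ = Pᶜ.erase j := by
          ext x; simp
        apply ih
        · exact h.trans (Finset.card_le_card (Finset.subset_insert _ _))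
        · rw [hco, Finset.card_erase_of_mem hj, hP]; rfl
  exact fun P h => key _ P h rfl

lemma ver_two (g n : ℕ) (d : Fin n → ℚ) (hd : ∑ i, d i = (g : ℚ) - 1) (P : Finset (Fin n)) :
    (2*(g:ℚ) - 2) * ∑ i ∈ P, (d i * (d i + 1) / 2)
      + (2 - 2*(g:ℚ) - ((n:ℚ) - (P.card : ℚ))) * (-((∑ i ∈ P, d i)^2 - ∑ i ∈ P, d i^2) / 2)
      + ∑ j ∈ Pᶜ, (-((∑ i ∈ insert j P, d i)^2 - ∑ i ∈ insert j P, d i^2) / 2)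
      = (g:ℚ) * (∑ i ∈ P, d i)^2 := by
  have hc : ((Pᶜ.card : ℕ) : ℚ) = (n : ℚ) - P.card := by
    have := Finset.card_add_card_compl P
    rw [Fintype.card_fin] at this
    have h' : (P.card : ℚ) + Pᶜ.card = n := by exact_mod_cast this
    linarith
  have hs : ∑ j ∈ Pᶜ, (-((∑ i ∈ insert j P, d i)^2 - ∑ i ∈ insert j P, d i^2) / 2)
      = ∑ j ∈ Pᶜ, (-((∑ i ∈ P, d i)^2 - ∑ i ∈ P, d i^2) / 2 - (∑ i ∈ P, d i) * d j) := by
    apply Finset.sum_congr rfl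
    intro j hj
    have hj' : j ∉ P := by simpa using hj
    rw [Finset.sum_insert hj', Finset.sum_insert hj']
    ring
  have h1 : ∑ i ∈ P, (d i * (d i + 1) / 2) = (∑ i ∈ P, d i^2 + ∑ i ∈ P, d i) / 2 := by
    rw [← Finset.sum_add_distrib, Finset.sum_div]
    exact Finset.sum_congr rfl fun i _ => by ring
  have h2 : ∑ j ∈ Pᶜ, d j = (g:ℚ) - 1 - ∑ i ∈ P, d i := by
    rw [← hd, ← Finset.sum_add_sum_compl P d]; ring
  rw [hs, h1, Finset.sum_sub_distrib, Finset.sum_const, nsmul_eq_mul, ← Finset.mul_sum, h2, hc]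
  ring

lemma ver_one (g n : ℕ) (d : Fin n → ℚ) (hd : ∑ i, d i = (g : ℚ) - 1) (i : Fin n) :
    (2*(g:ℚ) - 2) * (d i * (d i + 1) / 2)
      + ∑ j ∈ univ \ {i}, (-((∑ k ∈ ({i, j} : Finset (Fin n)), d k)^2
          - ∑ k ∈ ({i, j} : Finset (Fin n)), d k^2) / 2)
      = (g:ℚ) * d i^2 := by
  have := ver_two g n d hd {i}
  simp only [Finset.sum_singleton, sub_self, neg_zero, zero_div, mul_zero, add_zero] at this
  rw [← this, Finset.compl_eq_univ_sdiff]
  congr 1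
  apply Finset.sum_congr rfl
  intro j _
  rw [Finset.pair_comm]

lemma ver_three (g n : ℕ) (d : Fin n → ℚ) (hd : ∑ i, d i = (g : ℚ) - 1) (h : ℚ)
    (P : Finset (Fin n)) :
    ∑ i ∈ Pᶜ, (d i * (d i + 1) / 2)
      + (2 - 2*((g:ℚ) - h) - ((n:ℚ) - (P.card : ℚ)))
        * (-(((∑ i ∈ P, d i) - h) * ((∑ i ∈ P, d i) - h + 1)) / 2)
      + ∑ j ∈ Pᶜ, (-(((∑ i ∈ insert j P, d i) - h) * ((∑ i ∈ insert j P, d i) - h + 1)) / 2)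
      = ((g:ℚ) - h) * ((∑ i ∈ P, d i) - h)^2 := by
  have hc : ((Pᶜ.card : ℕ) : ℚ) = (n : ℚ) - P.card := by
    have := Finset.card_add_card_compl P
    rw [Fintype.card_fin] at this
    have h' : (P.card : ℚ) + Pᶜ.card = n := by exact_mod_cast this
    linarith
  have hs : ∑ j ∈ Pᶜ,
        (-(((∑ i ∈ insert j P, d i) - h) * ((∑ i ∈ insert j P, d i) - h + 1)) / 2)
      = ∑ j ∈ Pᶜ, (-(((∑ i ∈ P, d i) - h) * ((∑ i ∈ P, d i) - h + 1)) / 2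
          - ((∑ i ∈ P, d i) - h) * d j - d j * (d j + 1) / 2) := by
    apply Finset.sum_congr rfl
    intro j hj
    have hj' : j ∉ P := by simpa using hj
    rw [Finset.sum_insert hj']
    ring
  have h2 : ∑ j ∈ Pᶜ, d j = (g:ℚ) - 1 - ∑ i ∈ P, d i := by
    rw [← hd, ← Finset.sum_add_sum_compl P d]; ring
  rw [hs, Finset.sum_sub_distrib, Finset.sum_sub_distrib, Finset.sum_const, nsmul_eq_mul,
    ← Finset.mul_sum, h2, hc]
  ring



/-- Combinatorial form of the `Kᵢ`- and `δ_h^P`-coefficients of the main theorem in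
degree `g−1`: the system of intersection equations with the test curves `Zᵢ`, `Z_h^P`
has the coefficients of `[s_d^*Θ]` as its unique solution. -/
theorem stmt_10 (g n : ℕ) (hg : 3 ≤ g) (hn : 1 ≤ n) (d : Fin n → ℤ)
    (hd : ∑ i, d i = (g : ℤ) - 1)
    (c : Fin n → ℚ) (e : ℕ → Finset (Fin n) → ℚ)
    (hsym : ∀ h ≤ g, ∀ P : Finset (Fin n), e h P = e (g - h) Pᶜ) :
    ((∀ i : Fin n,
        (2*(g:ℚ) - 2) * c i + ∑ j ∈ univ \ {i}, e 0 {i, j}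
          = (g:ℚ) * (d i : ℚ)^2) ∧
     (∀ P : Finset (Fin n), 2 ≤ P.card →
        (2*(g:ℚ) - 2) * ∑ i ∈ P, c i
          + (2 - 2*(g:ℚ) - ((n:ℚ) - (P.card : ℚ))) * e 0 P
          + ∑ j ∈ Pᶜ, e 0 (insert j P)
          = (g:ℚ) * (∑ i ∈ P, (d i : ℚ))^2) ∧
     (∀ (h : ℕ) (P : Finset (Fin n)), 1 ≤ h → h ≤ g - 1 →
        ¬(h = g - 1 ∧ P = univ) →
        ∑ i ∈ Pᶜ, c i
          + (2 - 2*((g:ℚ) - (h:ℚ)) - ((n:ℚ) - (P.card : ℚ))) * e h P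
          + ∑ j ∈ Pᶜ, e h (insert j P)
          = ((g:ℚ) - (h:ℚ)) * ((∑ i ∈ P, (d i : ℚ)) - (h:ℚ))^2))
    ↔
    ((∀ i : Fin n, c i = (d i : ℚ) * ((d i : ℚ) + 1) / 2) ∧
     (∀ P : Finset (Fin n), 2 ≤ P.card →
        e 0 P = -((∑ i ∈ P, (d i : ℚ))^2 - ∑ i ∈ P, (d i : ℚ)^2) / 2) ∧
     (∀ (h : ℕ) (P : Finset (Fin n)), 1 ≤ h → h ≤ g - 1 →
        e h P = -(((∑ i ∈ P, (d i : ℚ)) - (h:ℚ))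
                  * ((∑ i ∈ P, (d i : ℚ)) - (h:ℚ) + 1)) / 2)) := by
  have hdq : ∑ i, (d i : ℚ) = (g : ℚ) - 1 := by
    have := congrArg (Int.cast : ℤ → ℚ) hd
    push_cast at this
    exact this
  constructor
  · rintro ⟨-, h2, h3⟩
    obtain ⟨hc, he⟩ := hom_pos g n hg (fun i => c i - (d i : ℚ) * ((d i : ℚ) + 1) / 2)
      (fun h P => e h P - -(((∑ i ∈ P, (d i : ℚ)) - (h:ℚ))
                  * ((∑ i ∈ P, (d i : ℚ)) - (h:ℚ) + 1)) / 2)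
      (by
        intro h hh hhg P
        have h2 : ∑ j ∈ Pᶜ, (d j : ℚ) = (g:ℚ) - 1 - ∑ i ∈ P, (d i : ℚ) := by
          rw [← hdq, ← Finset.sum_add_sum_compl P]; ring
        rw [hsym h (by omega) P, h2, Nat.cast_sub (by omega)]
        ring)
      (by
        intro h P hh hhg hne
        have a := h3 h P hh hhg hne
        have b := ver_three g n (fun i => (d i : ℚ)) hdq h P
        simp only [Finset.sum_sub_distrib]
        linear_combination a - b)
    have hc' : ∀ i : Fin n, c i = (d i : ℚ) * ((d i : ℚ) + 1) / 2 := fun i => by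
      have := hc i
      linarith
    refine ⟨hc', ?_, fun h P hh hhg => by
      have := he h P hh hhg
      linarith⟩
    intro P hP
    have := hom_zero g n hg
      (fun P => e 0 P - -((∑ i ∈ P, (d i : ℚ))^2 - ∑ i ∈ P, (d i : ℚ)^2) / 2)
      (by
        intro P hP
        have a := h2 P hP
        have b := ver_two g n (fun i => (d i : ℚ)) hdq P
        simp only [Finset.sum_sub_distrib]
        simp only [hc'] at a
        linear_combination a - b) P hP
    linarith
  · rintro ⟨hc, h0, he⟩
    refine ⟨fun i => ?_, fun P hP => ?_, fun h P hh hhg _ => ?_⟩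
    · rw [hc, ← ver_one g n (fun i => (d i : ℚ)) hdq i]
      congr 1
      apply Finset.sum_congr rfl
      intro j hj
      have hij : i ≠ j := by
        rintro rfl
        simp at hj
      exact h0 _ (Finset.card_pair hij).ge
    · rw [← ver_two g n (fun i => (d i : ℚ)) hdq P, h0 P hP]
      simp only [hc]
      congr 1
      apply Finset.sum_congr rfl
      intro j _
      exact h0 _ (hP.trans (Finset.card_le_card (Finset.subset_insert _ _)))
    · rw [← ver_three g n (fun i => (d i : ℚ)) hdq h P, he h P hh hhg]
      simp only [hc]
      congr 1
      apply Finset.sum_congr rfl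
      intro j _
      exact he h _ hh hhg
end
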